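/- (Stembridge's identity (I14).) Let q be a complex number with 0 < |q| < 1 and let k ≥ 1 be an integer. Then (q;q)_∞ · ∑_{s_1 ≥ s_2 ≥ ⋯ ≥ s_k ≥ 0} q^{s_1^2 + ⋯ + s_k^2 - s_1 + s_2 + ⋯ + s_k} (1 - q^{2 s_1}) / [(q;q)_{s_1-s_2} (q;q)_{s_2-s_3} ⋯ (q;q)_{s_{k-1}-s_k} (q;q)_{s_k}] = (q^3, q^{2k}, q^{2k+3}; q^{2k+3})_∞. -/

import Mathlib

/-- The finite q-Pochhammer symbol `(x;q)_n = ∏_{j=0}^{n-1} (1 - x q^j)`. -/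
noncomputable def qPoch (x q : ℂ) (n : ℕ) : ℂ := ∏ j ∈ Finset.range n, (1 - x * q ^ j)

/-- The infinite q-Pochhammer symbol `(x;q)_∞ = ∏_{j=0}^{∞} (1 - x q^j)`. -/
noncomputable def qPochInf (x q : ℂ) : ℂ := ∏' j : ℕ, (1 - x * q ^ j)

/-!
Bailey's chain relative to `a = q`, started from the unit Bailey pair and unfolded to bilateral
sums, has theta terms `(-q^{2k})^r q^{(2k+1) r(r-1)/2}` as `α`-sequences: one step of the chain
multiplies `α_r` by `q^{r(r+1)}`, and the unit pair itself is the finite Jacobi triple product at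
`a = 1`.  Iterating the step writes the `β`-sequence of the `k`-th pair as the inner sum of the
multisum over `s_2 ≥ ⋯ ≥ s_k`.

The remaining factor `q^{n² - n} (1 - q^{2n})`, with `n = s_1`, belongs to the parameter `q⁻¹`
instead of `q`.  Since the reflection `r ↦ -1 - r` sends `α_r` to `-q^{2r+1} α_r`, the factor
`1 - q^{2n}` turns `β_n` relative to `q` into `β_n` relative to `q⁻¹` with the same `α`.  The
limiting case of Bailey's lemma then gives a theta series, which the Jacobi triple product
evaluates.
-/

open Filter Topology

section QPochhammer

variable {q : ℂ}

lemma qPoch_zero (x q : ℂ) : qPoch x q 0 = 1 :=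
  Finset.prod_range_zero _

lemma qPoch_succ (x q : ℂ) (n : ℕ) : qPoch x q (n + 1) = qPoch x q n * (1 - x * q ^ n) :=
  Finset.prod_range_succ _ n

lemma qPoch_one_succ (q : ℂ) (n : ℕ) : qPoch 1 q (n + 1) = 0 :=
  Finset.prod_eq_zero (Finset.mem_range.mpr n.succ_pos) (by simp)

lemma one_sub_mul_pow_ne_zero (hq : ‖q‖ < 1) (n : ℕ) : 1 - q * q ^ n ≠ 0 := by
  intro h
  have hlt : ‖q ^ (n + 1)‖ < 1 := by
    rw [norm_pow]
    exact pow_lt_one₀ (norm_nonneg q) hq n.succ_ne_zero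
  rw [pow_succ', ← sub_eq_zero.mp h, norm_one] at hlt
  exact lt_irrefl _ hlt

lemma qPoch_self_ne_zero (hq : ‖q‖ < 1) (n : ℕ) : qPoch q q n ≠ 0 :=
  Finset.prod_ne_zero_iff.mpr fun j _ => one_sub_mul_pow_ne_zero hq j

lemma summable_norm_neg_mul_pow (hq : ‖q‖ < 1) (x : ℂ) :
    Summable fun j : ℕ => ‖-(x * q ^ j)‖ := by
  simp only [norm_neg, norm_mul, norm_pow]
  exact (summable_geometric_of_lt_one (norm_nonneg q) hq).mul_left _

lemma tendsto_qPoch (hq : ‖q‖ < 1) (x : ℂ) :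
    Tendsto (qPoch x q) atTop (𝓝 (qPochInf x q)) := by
  have h := (multipliable_one_add_of_summable
    (summable_norm_neg_mul_pow hq x)).hasProd.tendsto_prod_nat
  simp only [← sub_eq_add_neg] at h
  exact h

lemma qPochInf_self_ne_zero (hq : ‖q‖ < 1) : qPochInf q q ≠ 0 := by
  have h := tprod_one_add_ne_zero_of_summable (f := fun j : ℕ => -(q * q ^ j))
    (fun j => by simpa only [← sub_eq_add_neg] using one_sub_mul_pow_ne_zero hq j)
    (summable_norm_neg_mul_pow hq q)
  simp only [← sub_eq_add_neg] at h
  exact h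

/-- The reciprocal `1 / (q;q)_m`, extended to all integers `m` by zero for `m < 0`.  This is the
extension compatible with the recurrence `1 / (q;q)_{m-1} = (1 - q^m) / (q;q)_m`. -/
noncomputable def invQPoch (q : ℂ) (m : ℤ) : ℂ := if 0 ≤ m then (qPoch q q m.toNat)⁻¹ else 0

lemma invQPoch_natCast (q : ℂ) (n : ℕ) : invQPoch q n = (qPoch q q n)⁻¹ := by
  simp [invQPoch]

lemma invQPoch_zero (q : ℂ) : invQPoch q 0 = 1 := by
  simp [invQPoch, qPoch_zero]

lemma invQPoch_of_neg (q : ℂ) {m : ℤ} (hm : m < 0) : invQPoch q m = 0 :=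
  if_neg (not_le.mpr hm)

lemma invQPoch_sub_one (hq : ∀ n, qPoch q q n ≠ 0) (m : ℤ) :
    invQPoch q (m - 1) = (1 - q ^ m) * invQPoch q m := by
  rcases lt_trichotomy m 0 with hm | rfl | hm
  · rw [invQPoch_of_neg q hm, invQPoch_of_neg q (by omega), mul_zero]
  · simp [invQPoch_of_neg]
  · obtain ⟨n, rfl⟩ : ∃ n : ℕ, m = ((n + 1 : ℕ) : ℤ) := ⟨(m - 1).toNat, by omega⟩
    have hne := hq (n + 1)
    rw [Nat.cast_succ, add_sub_cancel_right, ← Nat.cast_succ, invQPoch_natCast, invQPoch_natCast,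
      zpow_natCast]
    rw [qPoch_succ] at hne ⊢
    rw [Nat.succ_eq_add_one, pow_succ', mul_inv_rev,
      mul_inv_cancel_left₀ (right_ne_zero_of_mul hne)]

lemma tendsto_invQPoch (hq : ‖q‖ < 1) (c : ℤ) :
    Tendsto (fun n : ℕ => invQPoch q (n + c)) atTop (𝓝 (qPochInf q q)⁻¹) := by
  have hindex : Tendsto (fun n : ℕ => ((n : ℤ) + c).toNat) atTop atTop := by
    refine tendsto_atTop.mpr fun b => ?_
    filter_upwards [eventually_ge_atTop (b + c.natAbs)] with n hn
    omega
  refine (((tendsto_qPoch hq q).inv₀ (qPochInf_self_ne_zero hq)).comp hindex).congr' ?_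
  filter_upwards [eventually_ge_atTop c.natAbs] with n hn
  exact (if_pos (by omega)).symm

lemma exists_norm_invQPoch_le (hq : ‖q‖ < 1) : ∃ C : ℝ, ∀ m : ℤ, ‖invQPoch q m‖ ≤ C := by
  obtain ⟨C, hC⟩ := (tendsto_invQPoch hq 0).norm.bddAbove_range
  have hnat (n : ℕ) : ‖invQPoch q n‖ ≤ C := by simpa using hC ⟨n, rfl⟩
  refine ⟨C, fun m => ?_⟩
  rcases lt_or_ge m 0 with hm | hm
  · rw [invQPoch_of_neg q hm, norm_zero]
    exact (norm_nonneg _).trans (hnat 0)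
  · lift m to ℕ using hm
    exact hnat m

end QPochhammer

section ThetaTerm

variable {a p q : ℂ}

/-- The general term `(-a)^r p^{r(r-1)/2}` of the bilateral theta series in Jacobi's triple
product. -/
noncomputable def thetaTerm (a p : ℂ) (r : ℤ) : ℂ := (-a) ^ r * p ^ (r * (r - 1) / 2)

lemma two_mul_triangle (r : ℤ) : 2 * (r * (r - 1) / 2) = r * (r - 1) :=
  Int.two_mul_ediv_two_of_even (Int.even_mul_pred_self r)

lemma thetaTerm_zero (a p : ℂ) : thetaTerm a p 0 = 1 := by
  simp [thetaTerm]

lemma thetaTerm_ne_zero (ha : a ≠ 0) (hp : p ≠ 0) (r : ℤ) : thetaTerm a p r ≠ 0 :=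
  mul_ne_zero (zpow_ne_zero _ (neg_ne_zero.mpr ha)) (zpow_ne_zero _ hp)

lemma thetaTerm_add_one (ha : a ≠ 0) (hp : p ≠ 0) (r : ℤ) :
    thetaTerm a p (r + 1) = -a * p ^ r * thetaTerm a p r := by
  have hexp : (r + 1) * (r + 1 - 1) / 2 = r * (r - 1) / 2 + r := by
    linarith [two_mul_triangle r, two_mul_triangle (r + 1)]
  rw [thetaTerm, thetaTerm, hexp, zpow_add₀ hp, zpow_add_one₀ (neg_ne_zero.mpr ha)]
  ring

lemma thetaTerm_neg (hp : p ≠ 0) (a : ℂ) (r : ℤ) :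
    thetaTerm a p (-r) = thetaTerm (p / a) p r := by
  have hexp : -r * (-r - 1) / 2 = r * (r - 1) / 2 + r := by
    linarith [two_mul_triangle r, two_mul_triangle (-r)]
  rw [thetaTerm, thetaTerm, hexp, zpow_add₀ hp, ← div_neg, div_zpow, zpow_neg]
  ring

lemma thetaTerm_neg_one_sub (ha : a ≠ 0) (hp : p ≠ 0) (r : ℤ) :
    thetaTerm a p (-1 - r) = -(p / a) ^ (2 * r + 1) * thetaTerm a p r := by
  have hexp : (-1 - r) * (-1 - r - 1) / 2 = r * (r - 1) / 2 + (2 * r + 1) := by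
    linarith [two_mul_triangle r, two_mul_triangle (-1 - r)]
  have hsign : -(p / a) ^ (2 * r + 1) = (p / -a) ^ (2 * r + 1) := by
    rw [div_neg, (odd_two_mul_add_one r).neg_zpow]
  rw [thetaTerm, thetaTerm, hexp, hsign, div_zpow, zpow_add₀ hp,
    show -1 - r = r - (2 * r + 1) by ring, zpow_sub₀ (neg_ne_zero.mpr ha)]
  ring

lemma zpow_mul_thetaTerm (hq : q ≠ 0) (a p : ℂ) (c r : ℤ) :
    q ^ (r * (r + c)) * thetaTerm a p r = thetaTerm (a * q ^ (c + 1)) (p * q ^ 2) r := by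
  have hexp : q ^ (r * (r + c)) = (q ^ (c + 1)) ^ r * (q ^ 2) ^ (r * (r - 1) / 2) := by
    rw [← zpow_natCast q 2, ← zpow_mul, ← zpow_mul, ← zpow_add₀ hq]
    congr 1
    push_cast
    linear_combination -two_mul_triangle r
  rw [thetaTerm, thetaTerm, hexp, ← neg_mul, mul_zpow, mul_zpow]
  ring

lemma summable_thetaTerm_natCast (ha : a ≠ 0) (hp : p ≠ 0) (hp1 : ‖p‖ < 1) :
    Summable fun n : ℕ => thetaTerm a p n := by
  have hratio (n : ℕ) : ‖a‖ * ‖p‖ ^ n = ‖thetaTerm a p ((n + 1 : ℕ) : ℤ)‖ / ‖thetaTerm a p n‖ := by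
    rw [eq_div_iff (norm_ne_zero_iff.mpr (thetaTerm_ne_zero ha hp n)), Nat.cast_succ,
      thetaTerm_add_one ha hp]
    simp
  have hlim : Tendsto (fun n : ℕ => ‖a‖ * ‖p‖ ^ n) atTop (𝓝 0) := by
    simpa using (tendsto_pow_atTop_nhds_zero_of_lt_one (norm_nonneg p) hp1).const_mul ‖a‖
  exact summable_of_ratio_test_tendsto_lt_one zero_lt_one
    (Eventually.of_forall fun n => thetaTerm_ne_zero ha hp n) (hlim.congr hratio)

lemma summable_thetaTerm (ha : a ≠ 0) (hp : p ≠ 0) (hp1 : ‖p‖ < 1) : Summable (thetaTerm a p) := by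
  refine (summable_thetaTerm_natCast ha hp hp1).of_nat_of_neg ?_
  simp only [thetaTerm_neg hp]
  exact summable_thetaTerm_natCast (div_ne_zero hp ha) hp hp1

lemma summable_zpow_mul_add (hq0 : q ≠ 0) (hq1 : ‖q‖ < 1) (c : ℤ) :
    Summable fun n : ℤ => q ^ (n * (n + c)) := by
  have hne : -1 * q ^ (c + 1) ≠ 0 := mul_ne_zero (by norm_num) (zpow_ne_zero _ hq0)
  have hnorm : ‖1 * q ^ 2‖ < 1 := by
    rw [one_mul, norm_pow]
    exact pow_lt_one₀ (norm_nonneg q) hq1 two_ne_zero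
  refine (summable_thetaTerm hne (by simpa using hq0) hnorm).congr fun n => ?_
  rw [← zpow_mul_thetaTerm hq0]
  simp [thetaTerm]

end ThetaTerm

section BaileySum

variable {q : ℂ}

/-- The bilateral Bailey sum `∑_r α_r / ((q;q)_{n-r} (q;q)_{m+r})` of a sequence `α` indexed by `ℤ`.
In Bailey's setting `m = n + d`: up to the constant factor `(q;q)_d` this is then the sequence `β_n`
that forms a Bailey pair relative to `q^d` with the folding of `α` onto `r ≥ 0`. -/
noncomputable def baileySum (q : ℂ) (α : ℤ → ℂ) (m n : ℤ) : ℂ :=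
  ∑' r : ℤ, α r * (invQPoch q (n - r) * invQPoch q (m + r))

lemma invQPoch_mul_invQPoch_eq_zero (q : ℂ) {m n r : ℤ} (hr : r ∉ Finset.Icc (-m) n) :
    invQPoch q (n - r) * invQPoch q (m + r) = 0 := by
  rw [Finset.mem_Icc, not_and_or, not_le, not_le] at hr
  rcases hr with hr | hr
  · rw [invQPoch_of_neg q (by omega : m + r < 0), mul_zero]
  · rw [invQPoch_of_neg q (by omega : n - r < 0), zero_mul]

lemma summable_baileySum (q : ℂ) (α : ℤ → ℂ) (m n : ℤ) :
    Summable fun r : ℤ => α r * (invQPoch q (n - r) * invQPoch q (m + r)) :=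
  summable_of_ne_finset_zero (s := Finset.Icc (-m) n) fun r hr => by
    rw [invQPoch_mul_invQPoch_eq_zero q hr, mul_zero]

lemma baileySum_eq_zero (q : ℂ) (α : ℤ → ℂ) {m n : ℤ} (hmn : m + n < 0) :
    baileySum q α m n = 0 := by
  have hterm (r : ℤ) : α r * (invQPoch q (n - r) * invQPoch q (m + r)) = 0 := by
    rw [invQPoch_mul_invQPoch_eq_zero q (by rw [Finset.mem_Icc]; omega), mul_zero]
  simp only [baileySum, hterm, tsum_zero]

lemma baileySum_zero_zero (q : ℂ) (α : ℤ → ℂ) : baileySum q α 0 0 = α 0 := by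
  rw [baileySum, tsum_eq_single 0]
  · simp [invQPoch_zero]
  · intro r hr
    rw [invQPoch_mul_invQPoch_eq_zero q (by rw [Finset.mem_Icc]; omega), mul_zero]

lemma baileySum_add (q : ℂ) (α β : ℤ → ℂ) (m n : ℤ) :
    baileySum q (fun r => α r + β r) m n = baileySum q α m n + baileySum q β m n := by
  simp only [baileySum, add_mul]
  exact (summable_baileySum q α m n).tsum_add (summable_baileySum q β m n)

lemma baileySum_const_mul (q c : ℂ) (α : ℤ → ℂ) (m n : ℤ) :
    baileySum q (fun r => c * α r) m n = c * baileySum q α m n := by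
  simp only [baileySum, mul_assoc, tsum_mul_left]

lemma baileySum_shift (q : ℂ) (α : ℤ → ℂ) (m n k : ℤ) :
    baileySum q (fun r => α (r + k)) (m + k) (n - k) = baileySum q α m n := by
  rw [baileySum, baileySum,
    ← (Equiv.addRight k).tsum_eq fun r => α r * (invQPoch q (n - r) * invQPoch q (m + r))]
  refine tsum_congr fun r => ?_
  rw [Equiv.coe_addRight, sub_sub, add_assoc, add_comm k r]

lemma baileySum_comp_neg (q : ℂ) (α : ℤ → ℂ) (m n : ℤ) :
    baileySum q (fun r => α (-r)) m n = baileySum q α n m := by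
  rw [baileySum, baileySum, ← (Equiv.neg ℤ).tsum_eq]
  refine tsum_congr fun r => ?_
  rw [Equiv.neg_apply, neg_neg, sub_neg_eq_add, ← sub_eq_add_neg, mul_comm (invQPoch q (n + r))]

lemma baileySum_comp_neg_one_sub (q : ℂ) (α : ℤ → ℂ) (n : ℤ) :
    baileySum q (fun r => α (-1 - r)) (n + 1) n = baileySum q α (n + 1) n := by
  rw [← baileySum_comp_neg q α n, ← baileySum_shift q _ n (n + 1) 1, add_sub_cancel_right]
  simp only [neg_add_rev, sub_eq_add_neg]

lemma one_sub_zpow_add_mul_baileySum (hq0 : q ≠ 0) (hq : ∀ n, qPoch q q n ≠ 0) (α : ℤ → ℂ)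
    (m n : ℤ) :
    (1 - q ^ (m + n)) * baileySum q α m n =
      baileySum q (fun r => α r + q ^ (n - 1 - r) * α (r + 1)) m (n - 1) := by
  have hpascal : (1 - q ^ (m + n)) * baileySum q α m n =
      baileySum q α m (n - 1) + baileySum q (fun r => q ^ (n - r) * α r) (m - 1) n := by
    -- Split `1 - q ^ (m + n)` as `(1 - q ^ (n - r)) + q ^ (n - r) * (1 - q ^ (m + r))`.
    rw [baileySum, baileySum, baileySum, ← tsum_mul_left,
      ← (summable_baileySum q _ _ _).tsum_add (summable_baileySum q _ _ _)]
    refine tsum_congr fun r => ?_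
    rw [sub_right_comm, sub_add_eq_add_sub, invQPoch_sub_one hq, invQPoch_sub_one hq,
      show m + n = n - r + (m + r) by ring, zpow_add₀ hq0]
    ring
  rw [hpascal, ← baileySum_shift q (fun r => q ^ (n - r) * α r) (m - 1) n 1, sub_add_cancel,
    baileySum_add]
  simp only [sub_sub, add_comm]

lemma one_sub_zpow_add_mul_baileySum' (hq0 : q ≠ 0) (hq : ∀ n, qPoch q q n ≠ 0) (α : ℤ → ℂ)
    (m n : ℤ) :
    (1 - q ^ (m + n)) * baileySum q α m n =
      baileySum q (fun r => α (r + 1) + q ^ (m + r) * α r) m (n - 1) := by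
  rw [← baileySum_comp_neg, add_comm m n, one_sub_zpow_add_mul_baileySum hq0 hq,
    ← baileySum_comp_neg, ← baileySum_shift q _ (m - 1) n 1, sub_add_cancel]
  congr 1
  funext r
  congr 3 <;> ring

end BaileySum

section JacobiTripleProduct

variable {a p : ℂ}

lemma one_sub_zpow_mul_baileySum_thetaTerm (ha : a ≠ 0) (hp0 : p ≠ 0)
    (hp : ∀ n, qPoch p p n ≠ 0) (m n : ℤ) :
    (1 - p ^ (m + n + 1)) * baileySum p (thetaTerm a p) m (n + 1) =
      (1 - a * p ^ n) * baileySum p (thetaTerm a p) m n := by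
  rw [add_assoc, one_sub_zpow_add_mul_baileySum hp0 hp, add_sub_cancel_right,
    ← baileySum_const_mul]
  congr 1
  funext r
  rw [thetaTerm_add_one ha hp0, zpow_sub₀ hp0]
  field_simp [zpow_ne_zero r hp0]
  ring

lemma qPoch_mul_baileySum_thetaTerm (ha : a ≠ 0) (hp0 : p ≠ 0) (hp : ∀ n, qPoch p p n ≠ 0)
    (m n : ℕ) :
    qPoch p p (m + n) * baileySum p (thetaTerm a p) m n =
      qPoch p p m * baileySum p (thetaTerm a p) m 0 * qPoch a p n := by
  induction n with
  | zero => rw [qPoch_zero, add_zero, mul_one, Nat.cast_zero]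
  | succ n ih =>
    have hstep := one_sub_zpow_mul_baileySum_thetaTerm ha hp0 hp m n
    rw [← Nat.cast_add, ← Nat.cast_succ, zpow_natCast, zpow_natCast, pow_succ'] at hstep
    rw [← add_assoc, qPoch_succ, qPoch_succ, Nat.cast_succ]
    linear_combination qPoch p p (m + n) * hstep + (1 - a * p ^ n) * ih

lemma finite_jacobi_triple_product (ha : a ≠ 0) (hp0 : p ≠ 0) (hp : ∀ n, qPoch p p n ≠ 0)
    (m n : ℕ) :
    qPoch p p (m + n) * baileySum p (thetaTerm a p) m n = qPoch a p n * qPoch (p / a) p m := by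
  have hreflect : baileySum p (thetaTerm a p) m 0 = baileySum p (thetaTerm (p / a) p) 0 m := by
    rw [← baileySum_comp_neg]
    simp only [thetaTerm_neg hp0]
  have hbase := qPoch_mul_baileySum_thetaTerm (div_ne_zero hp0 ha) hp0 hp 0 m
  rw [Nat.cast_zero, zero_add, qPoch_zero, baileySum_zero_zero, thetaTerm_zero, one_mul,
    one_mul] at hbase
  rw [qPoch_mul_baileySum_thetaTerm ha hp0 hp, hreflect, hbase, mul_comm]

lemma tendsto_tsum_mul_of_bounded {ι β R : Type*} [NormedRing R] [CompleteSpace R]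
    {l : Filter β} {f : ι → R} {w : β → ι → R} {W : ι → R} {C : ℝ}
    (hf : Summable fun i => ‖f i‖) (hw : ∀ i, Tendsto (w · i) l (𝓝 (W i)))
    (hC : ∀ n i, ‖w n i‖ ≤ C) :
    Tendsto (fun n => ∑' i, f i * w n i) l (𝓝 (∑' i, f i * W i)) :=
  tendsto_tsum_of_dominated_convergence (hf.mul_right C) (fun i => (hw i).const_mul (f i))
    (Eventually.of_forall fun n i => (norm_mul_le _ _).trans
      (mul_le_mul_of_nonneg_left (hC n i) (norm_nonneg _)))

lemma exists_norm_invQPoch_mul_invQPoch_le (hp : ‖p‖ < 1) :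
    ∃ C : ℝ, ∀ m n : ℤ, ‖invQPoch p m * invQPoch p n‖ ≤ C := by
  obtain ⟨C, hC⟩ := exists_norm_invQPoch_le hp
  refine ⟨C * C, fun m n => ?_⟩
  rw [norm_mul]
  exact mul_le_mul (hC m) (hC n) (norm_nonneg _) ((norm_nonneg _).trans (hC m))

lemma tendsto_baileySum (hp : ‖p‖ < 1) {α : ℤ → ℂ} (hα : Summable α) (d : ℤ) :
    Tendsto (fun n : ℕ => baileySum p α (n + d) n) atTop
      (𝓝 ((∑' r, α r) * ((qPochInf p p)⁻¹ * (qPochInf p p)⁻¹))) := by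
  obtain ⟨C, hC⟩ := exists_norm_invQPoch_mul_invQPoch_le hp
  rw [← tsum_mul_right]
  refine tendsto_tsum_mul_of_bounded hα.norm (fun r => ?_) fun n r => hC _ _
  simp only [add_assoc, sub_eq_add_neg]
  exact (tendsto_invQPoch hp (-r)).mul (tendsto_invQPoch hp (d + r))

theorem jacobi_triple_product (ha : a ≠ 0) (hp0 : p ≠ 0) (hp1 : ‖p‖ < 1) :
    ∑' r : ℤ, thetaTerm a p r = qPochInf a p * qPochInf (p / a) p * qPochInf p p := by
  have hdouble : Tendsto (fun n : ℕ => n + n) atTop atTop :=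
    tendsto_atTop_mono (fun n => Nat.le_add_left n n) tendsto_id
  have hleft := ((tendsto_qPoch hp1 p).comp hdouble).mul
    (tendsto_baileySum hp1 (summable_thetaTerm ha hp0 hp1) 0)
  have hright := (tendsto_qPoch hp1 a).mul (tendsto_qPoch hp1 (p / a))
  have hlim := tendsto_nhds_unique hleft (hright.congr fun n => by
    rw [add_zero]
    exact (finite_jacobi_triple_product ha hp0 (qPoch_self_ne_zero hp1) n n).symm)
  have hne := qPochInf_self_ne_zero hp1
  rw [← hlim]
  field_simp

end JacobiTripleProduct

section BaileyLemma

variable {q : ℂ}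

lemma baileySum_zpow_mul_invQPoch (hq0 : q ≠ 0) (hq : ∀ n, qPoch q q n ≠ 0) (c : ℤ) (n : ℕ) :
    baileySum q (fun s => q ^ (s * (s + c)) * invQPoch q (s + c)) 0 n =
      invQPoch q n * invQPoch q (n + c) := by
  induction n generalizing c with
  | zero => simp [baileySum_zero_zero, invQPoch_zero]
  | succ n ih =>
    have hne : 1 - q ^ ((n : ℤ) + 1) ≠ 0 := by
      have h := hq (n + 1)
      rw [qPoch_succ, ← pow_succ'] at h
      exact_mod_cast right_ne_zero_of_mul h
    have hpascal (r : ℤ) :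
        q ^ ((r + 1) * (r + 1 + c)) * invQPoch q (r + 1 + c) +
            q ^ r * (q ^ (r * (r + c)) * invQPoch q (r + c)) =
          q ^ (r * (r + (c + 1))) * invQPoch q (r + (c + 1)) := by
      rw [show r + c = r + (c + 1) - 1 by ring, invQPoch_sub_one hq,
        show r + 1 + c = r + (c + 1) by ring, add_one_mul, zpow_add₀ hq0, mul_sub_one,
        zpow_sub₀ hq0]
      field_simp [zpow_ne_zero r hq0]
      ring
    have hstep := one_sub_zpow_add_mul_baileySum' hq0 hq
      (fun s => q ^ (s * (s + c)) * invQPoch q (s + c)) 0 (n + 1)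
    simp only [add_sub_cancel_right, zero_add, hpascal] at hstep
    refine mul_left_cancel₀ hne ?_
    rw [Nat.cast_succ, hstep, ih, ← mul_assoc, ← invQPoch_sub_one hq, add_sub_cancel_right,
      add_assoc, add_comm 1 c]

theorem q_chu_vandermonde (hq0 : q ≠ 0) (hq : ∀ n, qPoch q q n ≠ 0) (d n r : ℤ) :
    baileySum q (fun s => q ^ (s * (s + d)) * invQPoch q (s + d + r)) (-r) n =
      q ^ (r * (r + d)) * (invQPoch q (n - r) * invQPoch q (n + d + r)) := by
  have hshift (s : ℤ) :
      q ^ ((s + r) * (s + r + d)) * invQPoch q (s + r + d + r) =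
        q ^ (r * (r + d)) * (q ^ (s * (s + (2 * r + d))) * invQPoch q (s + (2 * r + d))) := by
    rw [← mul_assoc, ← zpow_add₀ hq0]
    congr 2 <;> ring
  rw [← baileySum_shift q _ (-r) n r, neg_add_cancel]
  simp only [hshift]
  rw [baileySum_const_mul]
  rcases lt_or_ge (n - r) 0 with hneg | hnonneg
  · rw [baileySum_eq_zero q _ (by omega), invQPoch_of_neg q hneg, zero_mul]
  · obtain ⟨N, hN⟩ := Int.eq_ofNat_of_zero_le hnonneg
    rw [hN, baileySum_zpow_mul_invQPoch hq0 hq, ← hN]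
    congr 3
    ring

theorem bailey_lemma (hq0 : q ≠ 0) (hq : ∀ n, qPoch q q n ≠ 0) (α : ℤ → ℂ) (d n : ℤ) :
    ∑' s : ℤ, q ^ (s * (s + d)) * invQPoch q (n - s) * baileySum q α (s + d) s =
      baileySum q (fun r => q ^ (r * (r + d)) * α r) (n + d) n := by
  let F (s r : ℤ) : ℂ :=
    α r * (q ^ (s * (s + d)) * invQPoch q (s + d + r) * (invQPoch q (n - s) * invQPoch q (-r + s)))
  have hF : Summable (Function.uncurry F) := by
    refine summable_of_ne_finset_zero
      (s := Finset.Icc (-(n + d)) n ×ˢ Finset.Icc (-(n + d)) n) fun x hx => ?_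
    have hsupp : n - x.1 < 0 ∨ -x.2 + x.1 < 0 ∨ x.1 + d + x.2 < 0 := by
      simp only [Finset.mem_product, Finset.mem_Icc] at hx
      omega
    rcases hsupp with h | h | h <;> simp [Function.uncurry, F, invQPoch_of_neg q h]
  calc ∑' s : ℤ, q ^ (s * (s + d)) * invQPoch q (n - s) * baileySum q α (s + d) s
      = ∑' (s : ℤ) (r : ℤ), F s r := by
        refine tsum_congr fun s => ?_
        rw [baileySum, ← tsum_mul_left]
        refine tsum_congr fun r => ?_
        simp only [F, neg_add_eq_sub]
        ring
    _ = ∑' (r : ℤ) (s : ℤ), F s r := hF.tsum_comm.symm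
    _ = baileySum q (fun r => q ^ (r * (r + d)) * α r) (n + d) n := by
        refine tsum_congr fun r => ?_
        rw [tsum_mul_left, ← baileySum, q_chu_vandermonde hq0 hq]
        ring

lemma exists_norm_baileySum_le (hq : ‖q‖ < 1) {α : ℤ → ℂ} (hα : Summable α) :
    ∃ C : ℝ, ∀ m n : ℤ, ‖baileySum q α m n‖ ≤ C := by
  obtain ⟨C, hC⟩ := exists_norm_invQPoch_mul_invQPoch_le hq
  refine ⟨(∑' r, ‖α r‖) * C, fun m n => ?_⟩
  refine tsum_of_norm_bounded (hα.norm.hasSum.mul_right C) fun r => ?_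
  rw [norm_mul]
  exact mul_le_mul_of_nonneg_left (hC _ _) (norm_nonneg _)

lemma summable_zpow_mul {α : ℤ → ℂ} (hq0 : q ≠ 0) (hq1 : ‖q‖ < 1) (hα : Summable α) (d : ℤ) :
    Summable fun r : ℤ => q ^ (r * (r + d)) * α r :=
  ((summable_zpow_mul_add hq0 hq1 d).norm.mul_norm hα.norm).of_norm.comp_injective
    (i := fun r : ℤ => (r, r)) fun _ _ h => (Prod.mk.inj h).1

theorem limiting_bailey_lemma (hq0 : q ≠ 0) (hq1 : ‖q‖ < 1) {α : ℤ → ℂ} (hα : Summable α)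
    (d : ℤ) :
    qPochInf q q * ∑' s : ℤ, q ^ (s * (s + d)) * baileySum q α (s + d) s =
      ∑' r : ℤ, q ^ (r * (r + d)) * α r := by
  obtain ⟨C, hC⟩ := exists_norm_baileySum_le hq1 hα
  obtain ⟨D, hD⟩ := exists_norm_invQPoch_le hq1
  have hleft : Tendsto (fun n : ℕ => ∑' s : ℤ, q ^ (s * (s + d)) *
      (baileySum q α (s + d) s * invQPoch q (n + -s))) atTop
      (𝓝 (∑' s : ℤ, q ^ (s * (s + d)) * (baileySum q α (s + d) s * (qPochInf q q)⁻¹))) := by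
    refine tendsto_tsum_mul_of_bounded (C := C * D) (summable_zpow_mul_add hq0 hq1 d).norm
      (fun s => (tendsto_invQPoch hq1 (-s)).const_mul _) fun n s => ?_
    rw [norm_mul]
    exact mul_le_mul (hC _ _) (hD _) (norm_nonneg _) ((norm_nonneg _).trans (hC 0 0))
  have hright := tendsto_baileySum hq1 (summable_zpow_mul hq0 hq1 hα d) d
  have hlim := tendsto_nhds_unique hleft (hright.congr fun n => by
    rw [← bailey_lemma hq0 (qPoch_self_ne_zero hq1)]
    refine tsum_congr fun s => ?_
    rw [← sub_eq_add_neg]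
    ring)
  simp only [← mul_assoc] at hlim
  rw [tsum_mul_right] at hlim
  have hne := qPochInf_self_ne_zero hq1
  field_simp at hlim
  rw [← hlim, mul_comm]

lemma baileySum_eq_zero_of_reflect_eq_neg {α : ℤ → ℂ} (hα : ∀ r, α (-1 - r) = -α r) (n : ℤ) :
    baileySum q α (n + 1) n = 0 := by
  have hreflect := baileySum_comp_neg_one_sub q α n
  simp only [hα, ← neg_one_mul (α _)] at hreflect
  rw [baileySum_const_mul] at hreflect
  linear_combination (-1 / 2) * hreflect

theorem one_sub_zpow_mul_baileySum_of_reflect (hq0 : q ≠ 0) (hq : ∀ n, qPoch q q n ≠ 0)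
    {α : ℤ → ℂ} (hα : ∀ r, α (-1 - r) = -q ^ (2 * r + 1) * α r) (n : ℤ) :
    (1 - q ^ (2 * n)) * baileySum q α (n + 1) n = baileySum q α (n - 1) n := by
  have hodd (r : ℤ) : q ^ (-1 - r) * α (-1 - r) = -(q ^ r * α r) := by
    rw [hα, neg_mul, mul_neg, ← mul_assoc, ← zpow_add₀ hq0, show -1 - r + (2 * r + 1) = r by ring]
  have hexpand : baileySum q α (n - 1) n =
      baileySum q α (n + 1) n +
        (-(q ^ n * (1 + q)) * baileySum q (fun r => q ^ r * α r) (n + 1) n +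
          -q ^ (2 * n) * baileySum q (fun r => α (-1 - r)) (n + 1) n) := by
    rw [← baileySum_const_mul, ← baileySum_const_mul, ← baileySum_add, ← baileySum_add]
    refine tsum_congr fun r => ?_
    rw [show n - 1 + r = n + r - 1 by ring, invQPoch_sub_one hq,
      show n + r = n + 1 + r - 1 by ring, invQPoch_sub_one hq]
    simp only [hα, zpow_sub₀ hq0, zpow_add₀ hq0, two_mul, zpow_one]
    field_simp
    ring
  rw [hexpand, baileySum_eq_zero_of_reflect_eq_neg (α := fun r => q ^ r * α r) hodd,
    baileySum_comp_neg_one_sub]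
  ring

end BaileyLemma

section BaileyChain

variable {q : ℂ}

/-- The `β`-sequence of the `k`-th member of Bailey's chain relative to `a = q` that starts from
the unit Bailey pair; its `α`-sequence, unfolded to all integers, is a theta term. -/
noncomputable def chainBeta (q : ℂ) (k : ℕ) (n : ℤ) : ℂ :=
  baileySum q (thetaTerm (q ^ (2 * k)) (q ^ (2 * k + 1))) (n + 1) n

lemma chainBeta_of_neg (q : ℂ) (k : ℕ) {n : ℤ} (hn : n < 0) : chainBeta q k n = 0 :=
  baileySum_eq_zero q _ (by omega)

lemma chainBeta_zero (hq0 : q ≠ 0) (hq : ∀ n, qPoch q q n ≠ 0) (n : ℕ) :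
    chainBeta q 0 n = if n = 0 then 1 else 0 := by
  have hjacobi := finite_jacobi_triple_product one_ne_zero hq0 hq (n + 1) n
  refine mul_left_cancel₀ (hq (n + 1 + n)) ?_
  rw [chainBeta, mul_zero, zero_add, pow_zero, pow_one, ← Nat.cast_succ, hjacobi, div_one]
  cases n with
  | zero => simp [qPoch_zero]
  | succ n => simp [qPoch_one_succ]

lemma tsum_natCast_eq_tsum_int {M : Type*} [AddCommMonoid M] [TopologicalSpace M]
    {f : ℤ → M} (hf : ∀ n < 0, f n = 0) :
    ∑' n : ℕ, f n = ∑' n : ℤ, f n :=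
  Nat.cast_injective.tsum_eq fun n hn =>
    ⟨n.toNat, Int.toNat_of_nonneg (not_lt.mp fun hneg => hn (hf n hneg))⟩

lemma chainBeta_succ (hq0 : q ≠ 0) (hq : ∀ n, qPoch q q n ≠ 0) (k : ℕ) (n : ℤ) :
    chainBeta q (k + 1) n =
      ∑' s : ℕ, q ^ ((s : ℤ) * (s + 1)) * invQPoch q (n - s) * chainBeta q k s := by
  rw [tsum_natCast_eq_tsum_int
    (f := fun s : ℤ => q ^ (s * (s + 1)) * invQPoch q (n - s) * chainBeta q k s)
    fun s hs => by rw [chainBeta_of_neg q k hs, mul_zero]]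
  simp only [chainBeta]
  rw [bailey_lemma hq0 hq]
  simp only [zpow_mul_thetaTerm hq0]
  congr 2 <;> norm_cast <;> ring

lemma chainBeta_one (hq0 : q ≠ 0) (hq : ∀ n, qPoch q q n ≠ 0) (n : ℤ) :
    chainBeta q 1 n = invQPoch q n := by
  rw [← zero_add 1, chainBeta_succ hq0 hq, tsum_eq_single 0]
  · have hunit : chainBeta q 0 0 = 1 := by simpa using chainBeta_zero hq0 hq 0
    simp [hunit]
  · intro s hs
    rw [chainBeta_zero hq0 hq, if_neg hs, mul_zero]

lemma one_sub_zpow_mul_chainBeta (hq0 : q ≠ 0) (hq : ∀ n, qPoch q q n ≠ 0) (k : ℕ) (n : ℤ) :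
    (1 - q ^ (2 * n)) * chainBeta q k n =
      baileySum q (thetaTerm (q ^ (2 * k)) (q ^ (2 * k + 1))) (n - 1) n := by
  refine one_sub_zpow_mul_baileySum_of_reflect hq0 hq (fun r => ?_) n
  have hdiv : q ^ (2 * k + 1) / q ^ (2 * k) = q := by
    rw [pow_succ', mul_div_cancel_right₀ _ (pow_ne_zero _ hq0)]
  rw [thetaTerm_neg_one_sub (pow_ne_zero _ hq0) (pow_ne_zero _ hq0), hdiv]

theorem qPochInf_mul_tsum_chainBeta (hq0 : q ≠ 0) (hq1 : ‖q‖ < 1) (k : ℕ) :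
    qPochInf q q * ∑' n : ℕ, q ^ ((n : ℤ) * (n - 1)) * (1 - q ^ (2 * n)) * chainBeta q k n =
      ∑' r : ℤ, thetaTerm (q ^ (2 * k)) (q ^ (2 * k + 3)) r := by
  have hα : Summable (thetaTerm (q ^ (2 * k)) (q ^ (2 * k + 1))) :=
    summable_thetaTerm (pow_ne_zero _ hq0) (pow_ne_zero _ hq0) (by
      rw [norm_pow]
      exact pow_lt_one₀ (norm_nonneg q) hq1 (2 * k).succ_ne_zero)
  have hterm (n : ℕ) : q ^ ((n : ℤ) * (n - 1)) * (1 - q ^ (2 * n)) * chainBeta q k n =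
      q ^ ((n : ℤ) * (n + -1)) *
        baileySum q (thetaTerm (q ^ (2 * k)) (q ^ (2 * k + 1))) (n + -1) n := by
    rw [mul_assoc, ← sub_eq_add_neg, ← one_sub_zpow_mul_chainBeta hq0 (qPoch_self_ne_zero hq1)]
    norm_cast
  simp only [hterm]
  rw [tsum_natCast_eq_tsum_int (f := fun n : ℤ => q ^ (n * (n + -1)) *
      baileySum q (thetaTerm (q ^ (2 * k)) (q ^ (2 * k + 1))) (n + -1) n)
    fun n hn => by rw [baileySum_eq_zero q _ (by omega), mul_zero],
    limiting_bailey_lemma hq0 hq1 hα]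
  simp only [zpow_mul_thetaTerm hq0, neg_add_cancel, zpow_zero, mul_one, ← pow_add]

end BaileyChain

section Multisum

variable {q : ℂ} {k : ℕ}

/-- A finite tuple continued by zeros, so that `s_{k+1} = 0` as in the summand of the identity. -/
def extendByZero (s : Fin k → ℕ) (m : ℕ) : ℕ := if h : m < k then s ⟨m, h⟩ else 0

lemma extendByZero_of_le (s : Fin k → ℕ) {m : ℕ} (hm : k ≤ m) : extendByZero s m = 0 :=
  dif_neg (not_lt.mpr hm)

lemma extendByZero_zero (s : Fin (k + 1) → ℕ) : extendByZero s 0 = s 0 :=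
  dif_pos k.succ_pos

lemma extendByZero_cons_succ (n : ℕ) (s : Fin k → ℕ) (m : ℕ) :
    extendByZero (Fin.cons n s : Fin (k + 1) → ℕ) (m + 1) = extendByZero s m := by
  unfold extendByZero
  split_ifs with h₁ h₂ h₂
  · exact Fin.cons_succ (α := fun _ => ℕ) n s ⟨m, h₂⟩
  all_goals first | rfl | omega

lemma antitone_extendByZero_iff {s : Fin k → ℕ} : Antitone (extendByZero s) ↔ Antitone s := by
  constructor
  · intro h i j hij
    simpa [extendByZero] using h (Fin.le_def.mp hij)
  · intro h m n hmn
    unfold extendByZero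
    split_ifs with hn hm
    · exact h hmn
    all_goals omega

/-- The part of the multisum's summand that does not depend on the weight attached to the largest
entry `s_1 = s 0`.  Written with `invQPoch`, it vanishes unless the entries decrease weakly, so
that a sum over decreasing tuples becomes a sum over all tuples. -/
noncomputable def chainTerm (q : ℂ) (s : Fin (k + 1) → ℕ) : ℂ :=
  q ^ (∑ m ∈ Finset.range k, (extendByZero s (m + 1) : ℤ) * (extendByZero s (m + 1) + 1)) *
    ∏ m ∈ Finset.range (k + 1), invQPoch q ((extendByZero s m : ℤ) - extendByZero s (m + 1))

lemma chainTerm_fin_one (q : ℂ) (s : Fin 1 → ℕ) : chainTerm q s = invQPoch q (s 0) := by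
  simp [chainTerm, extendByZero_zero, extendByZero_of_le s le_rfl]

lemma chainTerm_cons (hq0 : q ≠ 0) (n : ℕ) (s : Fin (k + 1) → ℕ) :
    chainTerm q (Fin.cons n s : Fin (k + 2) → ℕ) =
      q ^ ((s 0 : ℤ) * (s 0 + 1)) * invQPoch q ((n : ℤ) - s 0) * chainTerm q s := by
  rw [chainTerm, chainTerm, Finset.sum_range_succ', Finset.prod_range_succ' _ (k + 1),
    zpow_add₀ hq0]
  simp only [extendByZero_cons_succ, extendByZero_zero, Fin.cons_zero]
  ring

lemma chainTerm_eq_zero (q : ℂ) {s : Fin (k + 1) → ℕ} (hs : ¬Antitone s) : chainTerm q s = 0 := by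
  obtain ⟨m, hm⟩ : ∃ m, extendByZero s m < extendByZero s (m + 1) := by
    by_contra! h
    exact hs (antitone_extendByZero_iff.mp (antitone_nat_of_succ_le h))
  have hmk : m < k + 1 := by
    by_contra! h
    rw [extendByZero_of_le s (h.trans m.le_succ)] at hm
    exact Nat.not_lt_zero _ hm
  rw [chainTerm, Finset.prod_eq_zero (Finset.mem_range.mpr hmk) (invQPoch_of_neg q (by omega)),
    mul_zero]

lemma summable_fin_cons_iff {M β : Type*} [AddCommMonoid M] [TopologicalSpace M]
    {f : (Fin (k + 1) → β) → M} :
    Summable (fun x : β × (Fin k → β) => f (Fin.cons x.1 x.2)) ↔ Summable f :=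
  (Fin.consEquiv fun _ => β).summable_iff

lemma tsum_fin_cons {E β : Type*} [NormedAddCommGroup E] [CompleteSpace E]
    {f : (Fin (k + 1) → β) → E} (hf : Summable f) :
    ∑' s, f s = ∑' (b : β) (s : Fin k → β), f (Fin.cons b s) :=
  ((Fin.consEquiv fun _ => β).tsum_eq f).symm.trans (summable_fin_cons_iff.mpr hf).tsum_prod

lemma summable_mul_chainTerm (hq0 : q ≠ 0) (hq1 : ‖q‖ < 1) {w : ℕ → ℂ} (hw : Summable w) :
    Summable fun s : Fin (k + 1) → ℕ => w (s 0) * chainTerm q s := by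
  obtain ⟨C, hC⟩ := exists_norm_invQPoch_le hq1
  induction k generalizing w with
  | zero =>
    refine ((hw.comp_injective
      (Equiv.funUnique (Fin 1) ℕ).injective).norm.mul_right C).of_norm_bounded fun s => ?_
    rw [chainTerm_fin_one, norm_mul]
    exact mul_le_mul_of_nonneg_left (hC _) (norm_nonneg _)
  | succ k ih =>
    have htail := ih ((summable_zpow_mul_add hq0 hq1 1).comp_injective Nat.cast_injective)
    refine summable_fin_cons_iff.mp (((hw.norm.mul_of_nonneg htail.norm (fun _ => norm_nonneg _)
      fun _ => norm_nonneg _).mul_right C).of_norm_bounded fun x => ?_)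
    rw [Fin.cons_zero, chainTerm_cons hq0, mul_right_comm, ← mul_assoc, norm_mul, norm_mul]
    exact mul_le_mul_of_nonneg_left (hC _) (mul_nonneg (norm_nonneg _) (norm_nonneg _))

theorem tsum_mul_chainTerm (hq0 : q ≠ 0) (hq1 : ‖q‖ < 1) {w : ℕ → ℂ} (hw : Summable w) :
    ∑' s : Fin (k + 1) → ℕ, w (s 0) * chainTerm q s = ∑' n : ℕ, w n * chainBeta q (k + 1) n := by
  induction k generalizing w with
  | zero =>
    rw [← (Equiv.funUnique (Fin 1) ℕ).tsum_eq]
    simp [chainTerm_fin_one, chainBeta_one hq0 (qPoch_self_ne_zero hq1)]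
  | succ k ih =>
    have hsum := summable_mul_chainTerm (k := k + 1) hq0 hq1 hw
    have hweight (n : ℕ) :
        Summable fun m : ℕ => q ^ ((m : ℤ) * (m + 1)) * invQPoch q ((n : ℤ) - m) :=
      summable_of_ne_finset_zero (s := Finset.range (n + 1)) fun m hm => by
        rw [Finset.mem_range] at hm
        rw [invQPoch_of_neg q (by omega), mul_zero]
    rw [tsum_fin_cons hsum]
    refine tsum_congr fun n => ?_
    simp only [Fin.cons_zero, chainTerm_cons hq0]
    rw [tsum_mul_left, ih (hweight n), ← chainBeta_succ hq0 (qPoch_self_ne_zero hq1)]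

lemma summable_zpow_mul_one_sub (hq0 : q ≠ 0) (hq1 : ‖q‖ < 1) :
    Summable fun n : ℕ => q ^ ((n : ℤ) * (n - 1)) * (1 - q ^ (2 * n)) := by
  refine (((summable_zpow_mul_add hq0 hq1 (-1)).sub
    (summable_zpow_mul_add hq0 hq1 1)).comp_injective Nat.cast_injective).congr fun n => ?_
  rw [Function.comp_apply, mul_one_sub, ← zpow_natCast, ← zpow_add₀ hq0, ← sub_eq_add_neg]
  congr 2
  push_cast
  ring

lemma stembridge_summand_eq (hq0 : q ≠ 0) {s : Fin (k + 1) → ℕ} (hs : Antitone s) :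
    q ^ ((∑ m ∈ Finset.range (k + 1), (extendByZero s m : ℤ) ^ 2) - (extendByZero s 0 : ℤ) +
          ∑ m ∈ Finset.Ico 1 (k + 1), (extendByZero s m : ℤ)) *
        (1 - q ^ (2 * extendByZero s 0)) /
        ∏ m ∈ Finset.range (k + 1), qPoch q q (extendByZero s m - extendByZero s (m + 1)) =
      q ^ ((s 0 : ℤ) * (s 0 - 1)) * (1 - q ^ (2 * s 0)) * chainTerm q s := by
  have hden (m : ℕ) : invQPoch q ((extendByZero s m : ℤ) - extendByZero s (m + 1)) =
      (qPoch q q (extendByZero s m - extendByZero s (m + 1)))⁻¹ := by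
    rw [← Nat.cast_sub (antitone_extendByZero_iff.mpr hs m.le_succ), invQPoch_natCast]
  have hexp : (∑ m ∈ Finset.range (k + 1), (extendByZero s m : ℤ) ^ 2) - (s 0 : ℤ) +
        ∑ m ∈ Finset.Ico 1 (k + 1), (extendByZero s m : ℤ) =
      (s 0 : ℤ) * (s 0 - 1) +
        ∑ m ∈ Finset.range k, (extendByZero s (m + 1) : ℤ) * (extendByZero s (m + 1) + 1) := by
    simp only [mul_add_one, Finset.sum_add_distrib, Finset.sum_range_succ', extendByZero_zero,
      Finset.sum_Ico_eq_sum_range, add_tsub_cancel_right, add_comm 1, ← sq]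
    ring
  simp only [chainTerm, hden, Finset.prod_inv_distrib, extendByZero_zero, hexp, zpow_add₀ hq0]
  ring

end Multisum

/-- Stembridge's identity (I14).  The tuple `s` encodes `s_1 ≥ s_2 ≥ ⋯ ≥ s_k ≥ 0` via
`s_m = t (m-1)`, with the convention `s_{k+1} = 0`; the exponent of `q` is the integer
`s_1² + ⋯ + s_k² - s_1 + s_2 + ⋯ + s_k`. -/
theorem stembridge_I14 (q : ℂ) (h0 : 0 < ‖q‖) (h1 : ‖q‖ < 1)
    (k : ℕ) (hk : 1 ≤ k) :
    qPochInf q q *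
      (∑' s : {s : Fin k → ℕ // Antitone s},
        (let t : ℕ → ℕ := fun m => if h : m < k then s.1 ⟨m, h⟩ else 0
         q ^ ((∑ m ∈ Finset.range k, (t m : ℤ) ^ 2) - (t 0 : ℤ) +
              ∑ m ∈ Finset.Ico 1 k, (t m : ℤ)) *
           (1 - q ^ (2 * t 0)) /
           ∏ m ∈ Finset.range k, qPoch q q (t m - t (m + 1)))) =
      qPochInf (q ^ 3) (q ^ (2 * k + 3)) * qPochInf (q ^ (2 * k)) (q ^ (2 * k + 3)) *
        qPochInf (q ^ (2 * k + 3)) (q ^ (2 * k + 3)) := by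
  have hq0 : q ≠ 0 := norm_pos_iff.mp h0
  have hnorm : ‖q ^ (2 * k + 3)‖ < 1 := by
    rw [norm_pow]
    exact pow_lt_one₀ h0.le h1 (2 * k + 2).succ_ne_zero
  have hdiv : q ^ (2 * k + 3) / q ^ (2 * k) = q ^ 3 := by
    rw [pow_add, mul_div_cancel_left₀ _ (pow_ne_zero _ hq0)]
  have htheta := jacobi_triple_product (pow_ne_zero (2 * k) hq0) (pow_ne_zero _ hq0) hnorm
  rw [hdiv, ← qPochInf_mul_tsum_chainBeta hq0 h1] at htheta
  obtain ⟨k, rfl⟩ := Nat.exists_eq_add_of_le' hk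
  rw [mul_comm (qPochInf (q ^ 3) _), ← htheta,
    ← tsum_mul_chainTerm hq0 h1 (summable_zpow_mul_one_sub hq0 h1),
    ← tsum_subtype_eq_of_support_subset (s := {s | Antitone s}) fun s hs => ?_]
  · exact congrArg _ (tsum_congr fun s => stembridge_summand_eq hq0 s.2)
  · by_contra hanti
    exact hs (mul_eq_zero_of_right _ (chainTerm_eq_zero q hanti))
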